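/- arXiv:0903.4162 — 5 statements merged into one kernel-verified Lean document; each statement's English description precedes it below -/
import Mathlib

section
/- For M > 0, λ ≥ 0, and any observed log-image g : Fin m × Fin n → ℝ, the penalized negative log-likelihood L(z) = M·∑_s (z_s + exp(g_s - z_s)) + λ·TV(z) is strictly convex on the space of images z : Fin m × Fin n → ℝ. -/
open scoped BigOperators

/-- The total variation of an image `z : Fin m × Fin n → ℝ`, using first-order horizontal
and vertical differences with periodic (cyclic) boundary conditions. -/
noncomputable def TV {m n : ℕ} [NeZero m] [NeZero n] (z : Fin m × Fin n → ℝ) : ℝ :=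
  ∑ s : Fin m × Fin n,
    Real.sqrt ((z (s.1 + 1, s.2) - z s) ^ 2 + (z (s.1, s.2 + 1) - z s) ^ 2)

theorem sqrt_aux (a b x y u v : ℝ) (ha : 0 ≤ a) (hb : 0 ≤ b) :
    Real.sqrt ((a * x + b * u) ^ 2 + (a * y + b * v) ^ 2) ≤
      a * Real.sqrt (x ^ 2 + y ^ 2) + b * Real.sqrt (u ^ 2 + v ^ 2) := by
  have hA := Real.sqrt_nonneg (x ^ 2 + y ^ 2)
  have hB := Real.sqrt_nonneg (u ^ 2 + v ^ 2)
  have hA2 := Real.sq_sqrt (show 0 ≤ x ^ 2 + y ^ 2 by positivity)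
  have hB2 := Real.sq_sqrt (show 0 ≤ u ^ 2 + v ^ 2 by positivity)
  set A := Real.sqrt (x ^ 2 + y ^ 2)
  set B := Real.sqrt (u ^ 2 + v ^ 2)
  have hc : x * u + y * v ≤ A * B := by
    refine abs_le_of_sq_le_sq' ?_ (by positivity) |>.2
    rw [mul_pow, hA2, hB2]
    nlinarith [sq_nonneg (x * v - y * u)]
  rw [Real.sqrt_le_iff]
  refine ⟨by positivity, ?_⟩
  have h := mul_le_mul_of_nonneg_left hc (mul_nonneg ha hb)
  have e : (a * A + b * B) ^ 2 = a ^ 2 * A ^ 2 + b ^ 2 * B ^ 2 + 2 * (a * b * (A * B)) := by ring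
  rw [e, hA2, hB2]
  nlinarith

theorem TV_aux {m n : ℕ} [NeZero m] [NeZero n] (a b : ℝ) (ha : 0 ≤ a) (hb : 0 ≤ b)
    (x y : Fin m × Fin n → ℝ) : TV (a • x + b • y) ≤ a * TV x + b * TV y := by
  unfold TV
  rw [Finset.mul_sum, Finset.mul_sum, ← Finset.sum_add_distrib]
  refine Finset.sum_le_sum fun s _ => ?_
  refine le_trans (le_of_eq ?_) (sqrt_aux a b _ _ _ _ ha hb)
  simp only [Pi.add_apply, Pi.smul_apply, smul_eq_mul]
  congr 1
  ring

theorem exp_aux (c a b x y : ℝ) (ha : 0 < a) (hb : 0 < b) (hab : a + b = 1) (hxy : x ≠ y) :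
    (a * x + b * y) + Real.exp (c - (a * x + b * y)) <
      a * (x + Real.exp (c - x)) + b * (y + Real.exp (c - y)) := by
  have h := strictConvexOn_exp.2 (Set.mem_univ (c - x)) (Set.mem_univ (c - y))
    (fun h => hxy (by linarith)) ha hb hab
  simp only [smul_eq_mul] at h
  have e : a * (c - x) + b * (c - y) = c - (a * x + b * y) := by
    linear_combination c * hab
  rw [e] at h
  linarith

/-- For `M > 0`, `λ ≥ 0` and any observed log-image `g`, the penalized negative
log-likelihood `L(z) = M • ∑ s, (z s + exp (g s - z s)) + λ • TV z` is strictly convex. -/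
theorem strictConvexOn_penalized_neg_log_likelihood {m n : ℕ} [NeZero m] [NeZero n]
    (M lam : ℝ) (hM : 0 < M) (hlam : 0 ≤ lam) (g : Fin m × Fin n → ℝ) :
    StrictConvexOn ℝ (Set.univ : Set (Fin m × Fin n → ℝ))
      (fun z => M * ∑ s : Fin m × Fin n, (z s + Real.exp (g s - z s)) + lam * TV z) := by
  refine ⟨convex_univ, ?_⟩
  intro x _ y _ hxy a b ha hb hab
  have hT := mul_le_mul_of_nonneg_left (TV_aux a b ha.le hb.le x y) hlam
  obtain ⟨t, ht⟩ := Function.ne_iff.mp hxy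
  have hS : ∑ s : Fin m × Fin n, ((a • x + b • y) s + Real.exp (g s - (a • x + b • y) s)) <
      a * ∑ s : Fin m × Fin n, (x s + Real.exp (g s - x s)) +
      b * ∑ s : Fin m × Fin n, (y s + Real.exp (g s - y s)) := by
    rw [Finset.mul_sum, Finset.mul_sum, ← Finset.sum_add_distrib]
    simp only [Pi.add_apply, Pi.smul_apply, smul_eq_mul]
    refine Finset.sum_lt_sum (fun s _ => ?_)
      ⟨t, Finset.mem_univ t, exp_aux _ a b _ _ ha hb hab ht⟩
    by_cases h : x s = y s
    · rw [h, ← add_mul, ← add_mul, hab, one_mul, one_mul]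
    · exact (exp_aux _ a b _ _ ha hb hab h).le
  have hS' := mul_lt_mul_of_pos_left hS hM
  simp only [smul_eq_mul] at *
  linarith
end

section
/- For M > 0, λ ≥ 0, and any observed log-image g : Fin m × Fin n → ℝ, the penalized negative log-likelihood L(z) = M·∑_s (z_s + exp(g_s - z_s)) + λ·TV(z) is coercive: L(z) → +∞ as ‖z‖ → ∞. -/
open scoped BigOperators
open Filter

/-- For `M > 0`, `λ ≥ 0` and any observed log-image `g`, the penalized negative
log-likelihood `L(z) = M • ∑ s, (z s + exp (g s - z s)) + λ • TV z` is coercive: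
`L(z) → +∞` as `‖z‖ → ∞`. -/
theorem coercive_penalized_neg_log_likelihood {m n : ℕ} [NeZero m] [NeZero n]
    (M lam : ℝ) (hM : 0 < M) (hlam : 0 ≤ lam) (g : Fin m × Fin n → ℝ) :
    Tendsto
      (fun z : Fin m × Fin n → ℝ =>
        M * ∑ s : Fin m × Fin n, (z s + Real.exp (g s - z s)) + lam * TV z)
      (Filter.comap (fun z : Fin m × Fin n → ℝ => ‖z‖) atTop) atTop := by
  have hpt : ∀ a x : ℝ, |x| - 2 * |a| ≤ x + Real.exp (a - x) := by
    intro a x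
    have h1 := Real.add_one_le_exp (a - x - 1)
    have h2 := Real.add_one_le_exp (1 : ℝ)
    have h3 : Real.exp (a - x) = Real.exp 1 * Real.exp (a - x - 1) := by
      rw [← Real.exp_add]; congr 1; ring
    have h4 := Real.exp_pos (a - x - 1)
    have h5 : 2 * (a - x) ≤ Real.exp (a - x) := by rw [h3]; nlinarith
    have h6 := Real.exp_pos (a - x)
    have h7 := neg_abs_le a
    have h8 := abs_nonneg a
    rcases abs_cases x with ⟨h, _⟩ | ⟨h, _⟩ <;> rw [h] <;> linarith
  have hbound : ∀ z : Fin m × Fin n → ℝ,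
      M * (‖z‖ - ∑ s, 2 * |g s|) ≤
        M * ∑ s : Fin m × Fin n, (z s + Real.exp (g s - z s)) + lam * TV z := by
    intro z
    have hTV : 0 ≤ TV z := Finset.sum_nonneg fun s _ => Real.sqrt_nonneg _
    have hn : ‖z‖ ≤ ∑ s, |z s| := by
      rw [pi_norm_le_iff_of_nonneg (Finset.sum_nonneg fun s _ => abs_nonneg _)]
      intro s
      exact Finset.single_le_sum (f := fun s => |z s|) (fun s _ => abs_nonneg _)
        (Finset.mem_univ s)
    have hs : ∑ s, |z s| - ∑ s, 2 * |g s| ≤ ∑ s, (z s + Real.exp (g s - z s)) := by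
      rw [← Finset.sum_sub_distrib]
      exact Finset.sum_le_sum fun s _ => hpt (g s) (z s)
    have h1 : ‖z‖ - ∑ s, 2 * |g s| ≤ ∑ s, (z s + Real.exp (g s - z s)) := by linarith
    have h2 := mul_le_mul_of_nonneg_left h1 hM.le
    have h3 := mul_nonneg hlam hTV
    linarith
  refine tendsto_atTop_mono hbound ?_
  refine Tendsto.const_mul_atTop hM ?_
  exact tendsto_atTop_add_const_right _ (-∑ s, 2 * |g s|) tendsto_comap
end

section
/- For M > 0, λ ≥ 0, and any observed log-image g : Fin m × Fin n → ℝ, the penalized negative log-likelihood L(z) = M·∑_s (z_s + exp(g_s - z_s)) + λ·TV(z) possesses a unique global minimizer: there exists exactly one image ẑ : Fin m × Fin n → ℝ such that L(ẑ) ≤ L(z) for all z. -/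
open scoped BigOperators

lemma aux_lower (g t : ℝ) : |t - g| + g ≤ t + Real.exp (g - t) := by
  rcases le_total g t with h | h
  · rw [abs_of_nonneg (by linarith)]
    have := Real.exp_pos (g - t)
    linarith
  · rw [abs_of_nonpos (by linarith)]
    have := Real.quadratic_le_exp_of_nonneg (x := g - t) (by linarith)
    nlinarith [sq_nonneg (g - t - 1)]

lemma aux_exp_le (x y : ℝ) :
    Real.exp ((x + y) / 2) ≤ (Real.exp x + Real.exp y) / 2 := by
  have h1 : Real.exp ((x + y) / 2) = Real.exp (x / 2) * Real.exp (y / 2) := by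
    rw [← Real.exp_add]; congr 1; ring
  have h2 : Real.exp x = Real.exp (x / 2) * Real.exp (x / 2) := by
    rw [← Real.exp_add]; congr 1; ring
  have h3 : Real.exp y = Real.exp (y / 2) * Real.exp (y / 2) := by
    rw [← Real.exp_add]; congr 1; ring
  rw [h1, h2, h3]
  nlinarith [sq_nonneg (Real.exp (x / 2) - Real.exp (y / 2))]

lemma aux_exp_lt (x y : ℝ) (hxy : x ≠ y) :
    Real.exp ((x + y) / 2) < (Real.exp x + Real.exp y) / 2 := by
  have h1 : Real.exp ((x + y) / 2) = Real.exp (x / 2) * Real.exp (y / 2) := by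
    rw [← Real.exp_add]; congr 1; ring
  have h2 : Real.exp x = Real.exp (x / 2) * Real.exp (x / 2) := by
    rw [← Real.exp_add]; congr 1; ring
  have h3 : Real.exp y = Real.exp (y / 2) * Real.exp (y / 2) := by
    rw [← Real.exp_add]; congr 1; ring
  have h4 : Real.exp (x / 2) - Real.exp (y / 2) ≠ 0 := by
    intro h
    have := Real.exp_injective (sub_eq_zero.mp h)
    apply hxy
    linarith
  rw [h1, h2, h3]
  nlinarith [sq_pos_of_ne_zero h4]

lemma aux_sqrt (a b c d : ℝ) :
    Real.sqrt (((a + b) / 2) ^ 2 + ((c + d) / 2) ^ 2) ≤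
      (Real.sqrt (a ^ 2 + c ^ 2) + Real.sqrt (b ^ 2 + d ^ 2)) / 2 := by
  have hp := Real.sqrt_nonneg (a ^ 2 + c ^ 2)
  have hq := Real.sqrt_nonneg (b ^ 2 + d ^ 2)
  have hp2 := Real.sq_sqrt (show 0 ≤ a ^ 2 + c ^ 2 by positivity)
  have hq2 := Real.sq_sqrt (show 0 ≤ b ^ 2 + d ^ 2 by positivity)
  have hc : a * b + c * d ≤ Real.sqrt (a ^ 2 + c ^ 2) * Real.sqrt (b ^ 2 + d ^ 2) := by
    apply le_of_abs_le
    apply abs_le_of_sq_le_sq _ (mul_nonneg hp hq)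
    rw [mul_pow, hp2, hq2]
    nlinarith [sq_nonneg (a * d - b * c)]
  apply Real.sqrt_le_iff.mpr
  constructor
  · positivity
  · nlinarith

lemma aux_TV_mid {m n : ℕ} [NeZero m] [NeZero n] (a b : Fin m × Fin n → ℝ) :
    TV (fun s => (a s + b s) / 2) ≤ (TV a + TV b) / 2 := by
  unfold TV
  rw [← Finset.sum_add_distrib, Finset.sum_div]
  apply Finset.sum_le_sum
  intro s _
  refine le_trans (le_of_eq ?_) (aux_sqrt _ _ _ _)
  congr 1
  ring

lemma aux_TV_nonneg {m n : ℕ} [NeZero m] [NeZero n] (a : Fin m × Fin n → ℝ) : 0 ≤ TV a :=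
  Finset.sum_nonneg fun _ _ => Real.sqrt_nonneg _

/-- For `M > 0`, `λ ≥ 0` and any observed log-image `g`, the penalized negative
log-likelihood `L(z) = M • ∑ s, (z s + exp (g s - z s)) + λ • TV z` has a unique
global minimizer. -/
theorem existsUnique_minimizer_penalized_neg_log_likelihood {m n : ℕ} [NeZero m] [NeZero n]
    (M lam : ℝ) (hM : 0 < M) (hlam : 0 ≤ lam) (g : Fin m × Fin n → ℝ) :
    ∃! zhat : Fin m × Fin n → ℝ, ∀ z : Fin m × Fin n → ℝ,
      M * ∑ s : Fin m × Fin n, (zhat s + Real.exp (g s - zhat s)) + lam * TV zhat ≤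
      M * ∑ s : Fin m × Fin n, (z s + Real.exp (g s - z s)) + lam * TV z := by
  obtain ⟨L, hL⟩ : ∃ L : (Fin m × Fin n → ℝ) → ℝ, L = fun z =>
      M * ∑ s : Fin m × Fin n, (z s + Real.exp (g s - z s)) + lam * TV z := ⟨_, rfl⟩
  have hLz : ∀ z, M * ∑ s : Fin m × Fin n, (z s + Real.exp (g s - z s)) + lam * TV z = L z := by
    intro z; rw [hL]
  simp only [hLz]
  have hcont : Continuous L := by
    rw [hL]; unfold TV; fun_prop
  have hlow : ∀ z, M * (∑ s, |z s - g s| + ∑ s, g s) ≤ L z := by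
    intro z
    rw [← hLz, ← Finset.sum_add_distrib]
    have h1 := Finset.sum_le_sum (s := Finset.univ) fun s _ => aux_lower (g s) (z s)
    have h2 := mul_le_mul_of_nonneg_left h1 hM.le
    have h3 := mul_nonneg hlam (aux_TV_nonneg z)
    linarith
  obtain ⟨C, hC⟩ : ∃ C, C = L g / M - ∑ s, g s := ⟨_, rfl⟩
  have hCL : M * (C + ∑ s, g s) = L g := by
    rw [hC]; field_simp; ring
  have hC0 : 0 ≤ C := by
    have h1 := hlow g
    simp only [sub_self, abs_zero, Finset.sum_const_zero] at h1
    rw [← hCL] at h1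
    have := le_of_mul_le_mul_left h1 hM
    linarith
  have hgmem : g ∈ Set.Icc (fun s => g s - C) (fun s => g s + C) :=
    ⟨fun s => by simp [hC0], fun s => by simp [hC0]⟩
  obtain ⟨x, -, hx⟩ := (isCompact_Icc (a := fun s => g s - C) (b := fun s => g s + C)).exists_isMinOn
    ⟨g, hgmem⟩ hcont.continuousOn
  have hmin : ∀ z, L x ≤ L z := by
    intro z
    by_cases hz : z ∈ Set.Icc (fun s => g s - C) (fun s => g s + C)
    · exact hx hz
    · have hgx : L x ≤ L g := hx hgmem
      refine hgx.trans ?_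
      have : ∃ s, C < |z s - g s| := by
        by_contra! hcon
        apply hz
        constructor
        · intro s
          have := (abs_le.mp (hcon s)).1
          show g s - C ≤ z s
          linarith
        · intro s
          have := (abs_le.mp (hcon s)).2
          show z s ≤ g s + C
          linarith
      obtain ⟨s, hs⟩ := this
      have h1 : |z s - g s| ≤ ∑ s, |z s - g s| :=
        Finset.single_le_sum (f := fun s => |z s - g s|) (fun _ _ => abs_nonneg _)
          (Finset.mem_univ s)
      rw [← hCL]
      refine le_trans ?_ (hlow z)
      apply mul_le_mul_of_nonneg_left _ hM.le
      linarith
  refine ⟨x, hmin, ?_⟩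
  intro y hy
  by_contra hne
  obtain ⟨s₀, hs₀⟩ := Function.ne_iff.mp hne
  have hmid : L (fun s => (x s + y s) / 2) < (L x + L y) / 2 := by
    rw [← hLz, ← hLz, ← hLz]
    have h1 : ∑ s, ((x s + y s) / 2 + Real.exp (g s - (x s + y s) / 2)) <
        ∑ s, (((x s + Real.exp (g s - x s)) + (y s + Real.exp (g s - y s))) / 2) := by
      have key : ∀ s, g s - (x s + y s) / 2 = ((g s - x s) + (g s - y s)) / 2 := by
        intro s; ring
      apply Finset.sum_lt_sum
      · intro s _
        rw [key]
        linarith [aux_exp_le (g s - x s) (g s - y s)]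
      · refine ⟨s₀, Finset.mem_univ _, ?_⟩
        rw [key]
        have := aux_exp_lt (g s₀ - x s₀) (g s₀ - y s₀) (fun h => hs₀ (by linarith))
        linarith
    rw [← Finset.sum_div, Finset.sum_add_distrib (f := fun s => x s + Real.exp (g s - x s))
      (g := fun s => y s + Real.exp (g s - y s))] at h1
    have h2 := mul_lt_mul_of_pos_left h1 hM
    have h3 := mul_le_mul_of_nonneg_left (aux_TV_mid x y) hlam
    linarith
  have h1 := hmin (fun s => (x s + y s) / 2)
  have h2 := hy x
  linarith
end

section
/- Let E : ℝⁿ → ℝ, let A be a real m × n matrix, let b, bᵏ ∈ ℝᵐ, let τ > 0, and set pᵏ = τ·Aᵀ(bᵏ - b). Then the two functions x ↦ E(x) - ⟨pᵏ, x⟩ + (τ/2)·‖A x - b‖² and x ↦ E(x) + (τ/2)·‖A x - bᵏ‖² differ by an additive constant independent of x; in particular they have the same set of minimizers. -/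
open scoped RealInnerProductSpace

/-- For a quadratic penalty `H(x) = (τ/2)‖A x - b‖²` and `pᵏ = τ·Aᵀ(bᵏ - b)`, the functions
`x ↦ E x - ⟪pᵏ, x⟫ + (τ/2)‖A x - b‖²` and `x ↦ E x + (τ/2)‖A x - bᵏ‖²` differ by an
additive constant; in particular they have the same minimizers. -/
theorem bregman_quadratic_equivalence (n m : ℕ)
    (E : EuclideanSpace ℝ (Fin n) → ℝ)
    (A : EuclideanSpace ℝ (Fin n) →L[ℝ] EuclideanSpace ℝ (Fin m))
    (b bk : EuclideanSpace ℝ (Fin m)) (τ : ℝ) (hτ : 0 < τ)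
    (pk : EuclideanSpace ℝ (Fin n)) (hpk : pk = τ • (ContinuousLinearMap.adjoint A) (bk - b)) :
    (∃ C : ℝ, ∀ x : EuclideanSpace ℝ (Fin n),
        E x - ⟪pk, x⟫ + τ / 2 * ‖A x - b‖ ^ 2 = E x + τ / 2 * ‖A x - bk‖ ^ 2 + C) ∧
    (∀ x₀ : EuclideanSpace ℝ (Fin n),
        (∀ x, E x₀ - ⟪pk, x₀⟫ + τ / 2 * ‖A x₀ - b‖ ^ 2 ≤
              E x - ⟪pk, x⟫ + τ / 2 * ‖A x - b‖ ^ 2) ↔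
        (∀ x, E x₀ + τ / 2 * ‖A x₀ - bk‖ ^ 2 ≤ E x + τ / 2 * ‖A x - bk‖ ^ 2)) := by
  have key : ∀ x : EuclideanSpace ℝ (Fin n),
      E x - ⟪pk, x⟫ + τ / 2 * ‖A x - b‖ ^ 2 =
        E x + τ / 2 * ‖A x - bk‖ ^ 2 + τ / 2 * (‖b‖ ^ 2 - ‖bk‖ ^ 2) := by
    intro x
    rw [hpk, real_inner_smul_left, ContinuousLinearMap.adjoint_inner_left, inner_sub_left,
      norm_sub_sq_real, norm_sub_sq_real, real_inner_comm (A x) b, real_inner_comm (A x) bk]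
    ring
  refine ⟨⟨_, key⟩, fun x₀ => forall_congr' fun x => ?_⟩
  rw [key x₀, key x, add_le_add_iff_right]
end

section
/- Let E : ℝⁿ → ℝ be convex, let H : ℝⁿ → ℝ be differentiable at x⁺ with gradient ∇H(x⁺), let p ∈ ℝⁿ be a subgradient of E at xᵏ, and suppose x⁺ minimizes the function x ↦ E(x) - E(xᵏ) - ⟨p, x - xᵏ⟩ + H(x) over ℝⁿ. Then p - ∇H(x⁺) is a subgradient of E at x⁺. -/
open scoped RealInnerProductSpace

/-- If `E` is convex, `p` is a subgradient of `E` at `xᵏ`, `H` has gradient `gH` at `x⁺`,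
and `x⁺` minimizes the Bregman-penalized objective `x ↦ E x - E xᵏ - ⟪p, x - xᵏ⟫ + H x`,
then `p - gH` is a subgradient of `E` at `x⁺`. -/
theorem bregman_subgradient_update (n : ℕ)
    (E H : EuclideanSpace ℝ (Fin n) → ℝ)
    (hE : ConvexOn ℝ Set.univ E)
    (xk xplus : EuclideanSpace ℝ (Fin n))
    (p gH : EuclideanSpace ℝ (Fin n))
    (hp : ∀ x : EuclideanSpace ℝ (Fin n), E xk + ⟪p, x - xk⟫ ≤ E x)
    (hH : HasGradientAt H gH xplus)
    (hmin : ∀ x : EuclideanSpace ℝ (Fin n),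
        E xplus - E xk - ⟪p, xplus - xk⟫ + H xplus ≤ E x - E xk - ⟪p, x - xk⟫ + H x) :
    ∀ x : EuclideanSpace ℝ (Fin n), E xplus + ⟪p - gH, x - xplus⟫ ≤ E x := by
  intro x
  have hd := (hH.hasFDerivAt.hasLineDerivAt (x - xplus)).tendsto_slope_zero_right
  have key : ⟪p, x - xplus⟫ - (E x - E xplus) ≤ ⟪gH, x - xplus⟫ := by
    have hd' : Filter.Tendsto
        (fun t : ℝ => t⁻¹ • (H (xplus + t • (x - xplus)) - H xplus))
        (nhdsWithin 0 (Set.Ioi 0)) (nhds ⟪gH, x - xplus⟫) := by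
      simpa using hd
    refine ge_of_tendsto hd' ?_
    filter_upwards [Ioc_mem_nhdsGT (show (0 : ℝ) < 1 by norm_num)] with t ht
    obtain ⟨h0, h1⟩ := ht
    have hc := hE.2 (Set.mem_univ xplus) (Set.mem_univ x) (sub_nonneg.2 h1) h0.le
      (by ring : (1 - t) + t = 1)
    have he : (1 - t) • xplus + t • x = xplus + t • (x - xplus) := by module
    rw [he] at hc
    have hm := hmin (xplus + t • (x - xplus))
    have hs : xplus + t • (x - xplus) - xk = (xplus - xk) + t • (x - xplus) := by module
    rw [hs, inner_add_right, inner_smul_right] at hm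
    simp only [smul_eq_mul] at hc ⊢
    rw [inv_mul_eq_div, le_div_iff₀ h0]
    linarith
  rw [inner_sub_left]
  linarith
end
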